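/- arXiv:2002.09363 — 2 statements merged into one kernel-verified Lean document; each statement's English description precedes it below -/
import Mathlib

section
/- Asymptotics of the boundary curve of G_2 (Proposition 4.1, series expansion): Let δ(γ) denote the unique positive root of the quartic polynomial p_γ(δ) := 16γ²δ⁴ + 24γ³δ² + (16γ⁵ − 4γ²)δ − 3γ⁴ for γ > 1. Then δ(γ) = 3/(16γ) + O(γ^{−4}) as γ → ∞; that is, there exist constants C > 0 and γ₀ > 1 such that |δ(γ) − 3/(16γ)| ≤ C γ^{−4} for all γ ≥ γ₀. -/
/-!
In the variables `x = γ δ` and `t = γ ^ 3` a root of `p_γ` satisfies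
`t (t (16 x - 3)) = t (4 x - 24 x ^ 2) - 16 x ^ 4`.
The first term on the right is at most `t / 6`, so `t (16 x - 3) ≤ 1 / 6`. If `t (16 x - 3) < -1`
and `0 ≤ x`, then `x < 3 / 16` and `t > 1 / 3`, which makes the right side greater than `-t`: a
contradiction. So `|t (16 x - 3)| ≤ 1` for every `t > 0`, and
`δ - 3 / (16 γ) = t (16 x - 3) / (16 γ ^ 4)`.
-/

open scoped BigOperators

noncomputable section

/-- The good set `G_d ⊆ (1,∞) × (0,∞)`. -/
def goodSet (d : ℕ) : Set (ℝ × ℝ) :=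
  {gd | 1 < gd.1 ∧ 0 < gd.2 ∧ ∃ ε > 0,
    gd.2 + gd.1 * ε ^ d ≤ ε ∧
    2 * d * gd.1 * ε ^ (d - 1) + 2 * d * gd.2 * ε ^ d < 1}

section CommRing

variable {R : Type*} [CommRing R]

/-- The quartic `p_γ(δ)` whose positive root in `δ` is the boundary curve of `G_2`. -/
def boundaryQuartic (γ δ : R) : R :=
  16 * γ ^ 2 * δ ^ 4 + 24 * γ ^ 3 * δ ^ 2 + (16 * γ ^ 5 - 4 * γ ^ 2) * δ - 3 * γ ^ 4

/-- The quartic `γ ^ 2 * p_γ(δ)` in the variables `t = γ ^ 3` and `x = γ * δ`, in which its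
positive root tends to the constant `3 / 16` as `t → ∞`. -/
def rescaledQuartic (t x : R) : R :=
  16 * x ^ 4 + 24 * t * x ^ 2 + (16 * t ^ 2 - 4 * t) * x - 3 * t ^ 2

theorem rescaledQuartic_pow_three_mul (γ δ : R) :
    rescaledQuartic (γ ^ 3) (γ * δ) = γ ^ 2 * boundaryQuartic γ δ := by
  unfold rescaledQuartic boundaryQuartic
  ring

theorem rescaledQuartic_eq_zero_iff {t x : R} :
    rescaledQuartic t x = 0 ↔
      t * (t * (16 * x - 3)) = t * (4 * x - 24 * x ^ 2) - 16 * x ^ 4 := by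
  unfold rescaledQuartic
  constructor <;> intro h <;> linear_combination h

end CommRing

section LinearOrderedField

variable {K : Type*} [Field K] [LinearOrder K] [IsStrictOrderedRing K] {t x : K}

theorem mul_sub_le_of_rescaledQuartic_eq_zero (ht : 0 < t) (h : rescaledQuartic t x = 0) :
    t * (16 * x - 3) ≤ 1 / 6 := by
  have quadratic_le : 4 * x - 24 * x ^ 2 ≤ 1 / 6 := by
    linarith [sq_nonneg (x - 1 / 12)]
  refine le_of_mul_le_mul_left ?_ ht
  calc t * (t * (16 * x - 3)) = t * (4 * x - 24 * x ^ 2) - 16 * x ^ 4 :=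
        rescaledQuartic_eq_zero_iff.mp h
    _ ≤ t * (4 * x - 24 * x ^ 2) := sub_le_self _ (by positivity)
    _ ≤ t * (1 / 6) := by gcongr

theorem neg_one_le_mul_sub_of_rescaledQuartic_eq_zero (ht : 0 < t) (hx : 0 ≤ x)
    (h : rescaledQuartic t x = 0) : -1 ≤ t * (16 * x - 3) := by
  by_contra! hlt
  have x_lt : x < 3 / 16 := by
    linarith [neg_of_mul_neg_right (hlt.trans neg_one_lt_zero) ht.le]
  have lt_t : 1 / 3 < t := by
    linarith [mul_nonneg ht.le hx]
  have quadratic_ge : -(1 / 2) ≤ 4 * x - 24 * x ^ 2 := by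
    linarith [mul_nonneg hx (sub_nonneg.mpr x_lt.le)]
  have quartic_le : 16 * x ^ 4 ≤ 1 / 6 :=
    calc 16 * x ^ 4 ≤ 16 * (3 / 16) ^ 4 := by gcongr
      _ ≤ 1 / 6 := by norm_num
  refine (mul_lt_mul_of_pos_left hlt ht).not_gt ?_
  calc t * -1 < t * -(1 / 2) - 1 / 6 := by linarith
    _ ≤ t * (4 * x - 24 * x ^ 2) - 16 * x ^ 4 := by gcongr
    _ = t * (t * (16 * x - 3)) := (rescaledQuartic_eq_zero_iff.mp h).symm

theorem abs_mul_sub_le_of_rescaledQuartic_eq_zero (ht : 0 < t) (hx : 0 ≤ x)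
    (h : rescaledQuartic t x = 0) : |t * (16 * x - 3)| ≤ 1 :=
  abs_le.mpr ⟨neg_one_le_mul_sub_of_rescaledQuartic_eq_zero ht hx h,
    (mul_sub_le_of_rescaledQuartic_eq_zero ht h).trans (by norm_num)⟩

theorem stmt10_general {γ δ : K} (hγ : 0 < γ) (hδ : 0 < δ) (h : boundaryQuartic γ δ = 0) :
    |δ - 3 / (16 * γ)| ≤ 1 / 16 / γ ^ 4 := by
  have rescaled_root : rescaledQuartic (γ ^ 3) (γ * δ) = 0 := by
    rw [rescaledQuartic_pow_three_mul, h, mul_zero]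
  calc |δ - 3 / (16 * γ)| = |γ ^ 3 * (16 * (γ * δ) - 3) / (16 * γ ^ 4)| := by
        congr 1
        field_simp
    _ = |γ ^ 3 * (16 * (γ * δ) - 3)| / (16 * γ ^ 4) := by
        rw [abs_div, abs_of_pos (by positivity : 0 < 16 * γ ^ 4)]
    _ ≤ 1 / (16 * γ ^ 4) := by
        gcongr
        exact abs_mul_sub_le_of_rescaledQuartic_eq_zero (by positivity) (by positivity)
          rescaled_root
    _ = 1 / 16 / γ ^ 4 := (div_div ..).symm

end LinearOrderedField

/-- Proposition 4.1, series expansion: asymptotics of the boundary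
curve of `G_2`. Any positive root `δ(γ)` of the quartic `p_γ` satisfies
`δ(γ) = 3/(16γ) + O(γ^{−4})`: there are `C > 0` and `γ₀ > 1` with
`|δ(γ) − 3/(16γ)| ≤ C γ^{−4}` for all `γ ≥ γ₀`. -/
theorem stmt10 :
    ∃ C : ℝ, 0 < C ∧ ∃ γ₀ : ℝ, 1 < γ₀ ∧
      ∀ γ : ℝ, γ₀ ≤ γ → ∀ δ0 : ℝ, 0 < δ0 →
        16 * γ ^ 2 * δ0 ^ 4 + 24 * γ ^ 3 * δ0 ^ 2 + (16 * γ ^ 5 - 4 * γ ^ 2) * δ0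
          - 3 * γ ^ 4 = 0 →
        |δ0 - 3 / (16 * γ)| ≤ C / γ ^ 4 := by
  exact ⟨1 / 16, by norm_num, 2, one_lt_two, fun γ hγ δ hδ h ↦
    stmt10_general (two_pos.trans_le hγ) hδ h⟩
end
end

section
/- Existence of non-constant q-periodic boundary law solutions for all large periods (Theorem 3.1, part 2): Fix an integer d ≥ 2. Let Q : ℤ → (0,∞) be even with Q(0) = 1 and Σ_{j∈ℤ} Q(j) < ∞, set Q̃(i) := sup_{|j| ≥ |i|} Q(j), and assume Σ_{i=1}^∞ (Σ_{j=1}^∞ Q̃(ij))^{(d+1)/2} < ∞. If (‖Q‖_{(d+1)/2,ℤ}, ‖Q‖_{d+1,ℤ∖{0}}) lies in the interior G_d° of the good set (as a subset of ℝ²), then there exists q₀ = q₀(Q,d) such that for every integer q ≥ q₀ there exists a non-constant λ : ℤ/qℤ → (0,∞) with λ(0̄) = 1 satisfying λ(ī) = (Σ_{j̄∈ℤ/qℤ} Q_q(ī − j̄) λ(j̄) / Σ_{j̄∈ℤ/qℤ} Q_q(j̄) λ(j̄))^d for every ī ∈ ℤ/qℤ. -/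
/-!
Write a boundary law as `λ = x ^ d` with `x 0 = 1`. The equation then says that `x` is a fixed point
of `x ↦ (Q_q * x ^ d) / (Q_q * x ^ d)(0)`. The denominator is at least `1`, and
`Q_q * x ^ d = Q_q + Q_q * (x ^ d off 0)`, so Young's inequality
`‖Q_q * y‖_{d+1} ≤ ‖Q_q‖_{(d+1)/2} ‖y‖_{(d+1)/d}` together with `‖x ^ d‖_{(d+1)/d} = ‖x‖_{d+1} ^ d`
shows that the first inequality of the good set keeps the `ε`-ball of `ℓ^{d+1}` off `0` invariant.
By Hölder's inequality the left side of the second one bounds the Lipschitz constant of the map on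
this ball, so Banach's theorem provides a fixed point. The second inequality also forces `ε < 1`,
hence `x < 1` off `0` and the solution is not constant.

As `q → ∞`, the `ℓ¹` distance between `Q_q` and the restriction of `Q` to the minimal
representatives mod `q` tends to `0`. Since `ℓ¹` dominates `ℓ^p`, the two norms of `Q_q` exceed
those of `Q` by arbitrarily little, and the interior of the good set absorbs this excess.
-/

open scoped BigOperators
open Filter Topology

noncomputable section

/-- The fuzzy transfer operator `Q_q(ī) = Σ_{j ≡ i mod q} Q(j)`. -/
noncomputable def Qfuzzy (q : ℕ) (Q : ℤ → ℝ) (i : ZMod q) : ℝ :=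
  ∑' j : {j : ℤ // (j : ZMod q) = i}, Q j.1

/-- The `p`-norm `‖x‖_{p,ℤ}`. -/
noncomputable def normZ (p : ℝ) (x : ℤ → ℝ) : ℝ :=
  (∑' j : ℤ, |x j| ^ p) ^ (1 / p)

/-- The `p`-norm `‖x‖_{p,ℤ∖{0}}`. -/
noncomputable def normZ0 (p : ℝ) (x : ℤ → ℝ) : ℝ :=
  (∑' j : {j : ℤ // j ≠ 0}, |x j.1| ^ p) ^ (1 / p)

/-- The `p`-norm `‖x‖_{p,ℤ/qℤ}`. -/
noncomputable def normM (q : ℕ) (p : ℝ) (x : ZMod q → ℝ) : ℝ :=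
  (∑' i : ZMod q, |x i| ^ p) ^ (1 / p)

/-- The `p`-norm `‖x‖_{p,ℤ/qℤ∖{0̄}}`. -/
noncomputable def normM0 (q : ℕ) (p : ℝ) (x : ZMod q → ℝ) : ℝ :=
  (∑' i : {i : ZMod q // i ≠ 0}, |x i.1| ^ p) ^ (1 / p)

/-- `Q̃(i) := sup_{|j| ≥ |i|} Q(j)`. -/
noncomputable def Qtilde (Q : ℤ → ℝ) (i : ℤ) : ℝ :=
  ⨆ j : {j : ℤ // |i| ≤ |j|}, Q j.1

/-- The `ℓ^p` norm of a function on a finite type, for a real exponent `p`. -/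
def lpNorm {ι : Type*} [Fintype ι] (p : ℝ) (f : ι → ℝ) : ℝ :=
  (∑ i, |f i| ^ p) ^ (1 / p)

section LpNorm

open Matrix

variable {ι : Type*} [Fintype ι] {p q r : ℝ} {f g : ι → ℝ}

lemma sum_abs_rpow_nonneg (p : ℝ) (f : ι → ℝ) : 0 ≤ ∑ i, |f i| ^ p :=
  Finset.sum_nonneg fun _ _ => Real.rpow_nonneg (abs_nonneg _) _

lemma lpNorm_nonneg (p : ℝ) (f : ι → ℝ) : 0 ≤ lpNorm p f :=
  Real.rpow_nonneg (sum_abs_rpow_nonneg p f) _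

lemma lpNorm_mono (hp : 0 ≤ p) (h : ∀ i, |f i| ≤ |g i|) : lpNorm p f ≤ lpNorm p g :=
  Real.rpow_le_rpow (sum_abs_rpow_nonneg p f)
    (Finset.sum_le_sum fun i _ => Real.rpow_le_rpow (abs_nonneg _) (h i) hp) (by positivity)

lemma lpNorm_abs (p : ℝ) (f : ι → ℝ) : lpNorm p |f| = lpNorm p f := by
  simp only [lpNorm, Pi.abs_apply, abs_abs]

lemma lpNorm_add_le (hp : 1 ≤ p) (f g : ι → ℝ) : lpNorm p (f + g) ≤ lpNorm p f + lpNorm p g :=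
  Real.Lp_add_le _ f g hp

lemma lpNorm_smul (hp : 0 < p) (c : ℝ) (f : ι → ℝ) : lpNorm p (c • f) = |c| * lpNorm p f := by
  simp only [lpNorm, Pi.smul_apply, smul_eq_mul, abs_mul,
    Real.mul_rpow (abs_nonneg _) (abs_nonneg _), ← Finset.mul_sum]
  rw [Real.mul_rpow (by positivity) (sum_abs_rpow_nonneg p f), ← Real.rpow_mul (abs_nonneg c),
    mul_one_div_cancel hp.ne', Real.rpow_one]

lemma lpNorm_pow {d : ℕ} (hd : d ≠ 0) (r : ℝ) (f : ι → ℝ) :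
    lpNorm (r / d) (f ^ d) = lpNorm r f ^ d := by
  have key (i : ι) : |(f ^ d) i| ^ (r / d) = |f i| ^ r := by
    rw [Pi.pow_apply, abs_pow, ← Real.rpow_natCast_mul (abs_nonneg _),
      mul_div_cancel₀ _ (Nat.cast_ne_zero.2 hd)]
  simp only [lpNorm, key]
  rw [← Real.rpow_mul_natCast (sum_abs_rpow_nonneg r f), one_div_div, div_mul_eq_mul_div, one_mul]

lemma lpNorm_eq_norm_toLp (hp : 1 ≤ p) (f : ι → ℝ) :
    lpNorm p f = ‖WithLp.toLp (ENNReal.ofReal p) f‖ := by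
  have hp' : (ENNReal.ofReal p).toReal = p := ENNReal.toReal_ofReal (by linarith)
  rw [PiLp.norm_eq_sum (by rw [hp']; linarith), hp']
  rfl

lemma fact_one_le_ofReal (hp : 1 ≤ p) : Fact (1 ≤ ENNReal.ofReal p) :=
  ⟨ENNReal.one_le_ofReal.2 hp⟩

lemma abs_le_lpNorm (hp : 1 ≤ p) (f : ι → ℝ) (i : ι) : |f i| ≤ lpNorm p f := by
  have := fact_one_le_ofReal hp
  rw [lpNorm_eq_norm_toLp hp]
  exact PiLp.norm_apply_le (WithLp.toLp (ENNReal.ofReal p) f) i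

lemma continuous_lpNorm (hp : 1 ≤ p) : Continuous (lpNorm p : (ι → ℝ) → ℝ) := by
  have := fact_one_le_ofReal hp
  simp only [funext (lpNorm_eq_norm_toLp (ι := ι) hp)]
  exact continuous_norm.comp (PiLp.continuous_toLp _ _)

lemma lpNorm_le_sum_abs (hp : 1 ≤ p) (f : ι → ℝ) : lpNorm p f ≤ ∑ i, |f i| := by
  classical
  have := fact_one_le_ofReal hp
  let e (i : ι) : PiLp (ENNReal.ofReal p) fun _ : ι => ℝ := PiLp.single _ i (f i)
  have hf : WithLp.toLp _ f = ∑ i, e i := by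
    simp only [e, PiLp.single, ← WithLp.toLp_sum, Finset.univ_sum_single]
  calc lpNorm p f = ‖∑ i, e i‖ := by rw [lpNorm_eq_norm_toLp hp, hf]
    _ ≤ ∑ i, ‖e i‖ := norm_sum_le _ _
    _ = ∑ i, |f i| := by simp only [e, PiLp.norm_single, Real.norm_eq_abs]

lemma lpNorm_mul_le (h : p.HolderTriple q r) (f g : ι → ℝ) :
    lpNorm r (f * g) ≤ lpNorm p f * lpNorm q g := by
  have hr := h.pos'
  have hf := sum_abs_rpow_nonneg p f
  have hg := sum_abs_rpow_nonneg q g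
  calc lpNorm r (f * g)
      ≤ ((∑ i, |f i| ^ p) ^ (r / p) * (∑ i, |g i| ^ q) ^ (r / q)) ^ (1 / r) :=
        Real.rpow_le_rpow (sum_abs_rpow_nonneg r _) (Real.Lr_rpow_le_Lp_mul_Lq _ f g h)
          (by positivity)
    _ = lpNorm p f * lpNorm q g := by
        rw [Real.mul_rpow (by positivity) (by positivity), ← Real.rpow_mul hf, ← Real.rpow_mul hg,
          div_mul_div_cancel₀' hr.ne', div_mul_div_cancel₀' hr.ne', lpNorm, lpNorm]

lemma abs_dotProduct_le (h : p.HolderConjugate q) (f g : ι → ℝ) :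
    |f ⬝ᵥ g| ≤ lpNorm p f * lpNorm q g :=
  calc |f ⬝ᵥ g| ≤ ∑ i, |f i * g i| := Finset.abs_sum_le_sum_abs _ _
    _ = lpNorm 1 (f * g) := by simp [lpNorm]
    _ ≤ lpNorm p f * lpNorm q g := lpNorm_mul_le h f g

lemma exists_fixedPoint_of_lpNorm_contraction (hp : 1 ≤ p) {s : Set (ι → ℝ)} (hs : IsClosed s)
    (hne : s.Nonempty) {T : (ι → ℝ) → ι → ℝ} (hT : Set.MapsTo T s s) {K : ℝ} (hK : K < 1)
    (hlip : ∀ x ∈ s, ∀ y ∈ s, lpNorm p (T x - T y) ≤ K * lpNorm p (x - y)) :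
    ∃ x ∈ s, T x = x := by
  have := fact_one_le_ofReal hp
  let E := PiLp (ENNReal.ofReal p) fun _ : ι => ℝ
  let s' : Set E := {x | WithLp.ofLp x ∈ s}
  let T' : E → E := fun x => WithLp.toLp _ (T (WithLp.ofLp x))
  have hs' : IsComplete s' := (hs.preimage (PiLp.continuous_ofLp _ _)).isComplete
  have hT' : Set.MapsTo T' s' s' := fun x hx => hT hx
  have hcontr : ContractingWith K.toNNReal (hT'.restrict T' s' s') := by
    refine ⟨Real.toNNReal_lt_one.2 hK, LipschitzWith.of_dist_le_mul fun x y => ?_⟩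
    have h := (hlip _ x.2 _ y.2).trans
      (mul_le_mul_of_nonneg_right (Real.le_coe_toNNReal K) (lpNorm_nonneg _ _))
    rwa [lpNorm_eq_norm_toLp hp, lpNorm_eq_norm_toLp hp] at h
  obtain ⟨x, hx⟩ := hne
  obtain ⟨y, hy, hfix, -⟩ :=
    hcontr.exists_fixedPoint' hs' hT' (x := WithLp.toLp _ x) hx (edist_ne_top _ _)
  exact ⟨WithLp.ofLp y, hy, congrArg WithLp.ofLp hfix⟩

lemma sum_prod_rpow_le_prod_sum_rpow {κ : Type*} (s : Finset κ) {u : κ → ι → ℝ}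
    (hu : ∀ k i, 0 ≤ u k i) {w : κ → ℝ} (hw : ∀ k ∈ s, 0 ≤ w k) (hw1 : ∑ k ∈ s, w k = 1) :
    ∑ i, ∏ k ∈ s, u k i ^ w k ≤ ∏ k ∈ s, (∑ i, u k i) ^ w k := by
  let _ : MeasurableSpace ι := ⊤
  lift u to κ → ι → NNReal using hu
  have h := ENNReal.lintegral_prod_norm_pow_le (μ := MeasureTheory.Measure.count) s
    (f := fun k i => (u k i : ENNReal)) (fun _ _ => (measurable_of_finite _).aemeasurable) hw1 hw
  simp only [MeasureTheory.lintegral_count, tsum_fintype] at h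
  rw [Finset.sum_congr rfl fun i _ => Finset.prod_congr rfl fun k hk =>
    (ENNReal.coe_rpow_of_nonneg (u k i) (hw k hk)).symm] at h
  simp only [← ENNReal.ofNNReal_finsetSum] at h
  rw [Finset.prod_congr rfl fun k hk =>
    (ENNReal.coe_rpow_of_nonneg (∑ i, u k i) (hw k hk)).symm] at h
  beta_reduce
  exact_mod_cast h

end LpNorm

section Young

open Matrix

variable {G : Type*} [Fintype G] [AddGroup G] {p q r : ℝ}

lemma one_div_le_one_div_of_add_eq_one_add (hp : 1 ≤ p) (h : 1 / p + 1 / q = 1 + 1 / r) :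
    1 / r ≤ 1 / q := by
  have : 1 / p ≤ 1 := (div_le_one (by linarith)).2 hp
  linarith

lemma mul_eq_rpow_mul_rpow_mul_rpow {a b : ℝ} (ha : 0 ≤ a) (hb : 0 ≤ b) (hp : 0 < p) (hq : 0 < q)
    (s : ℝ) :
    a * b = (a ^ p * b ^ q) ^ s * (a ^ p) ^ (1 / p - s) * (b ^ q) ^ (1 / q - s) := by
  have key {c t : ℝ} (hc : 0 ≤ c) (ht : 0 < t) : (c ^ t) ^ s * (c ^ t) ^ (1 / t - s) = c := by
    rw [← Real.rpow_add' (by positivity) (by simpa using ht.ne'), add_sub_cancel, one_div,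
      Real.rpow_rpow_inv hc ht.ne']
  rw [Real.mul_rpow (by positivity) (by positivity), mul_right_comm _ ((b ^ q) ^ s), key ha hp,
    mul_assoc, key hb hq]

lemma abs_circulant_mulVec_le (hp : 1 ≤ p) (hq : 1 ≤ q) (hr : 0 < r)
    (h : 1 / p + 1 / q = 1 + 1 / r) (A f : G → ℝ) (i : G) :
    |(circulant A *ᵥ f) i| ≤ (∑ j, |A j| ^ p) ^ (1 / p - 1 / r) *
      (∑ j, |f j| ^ q) ^ (1 / q - 1 / r) * (∑ j, |A (i - j)| ^ p * |f j| ^ q) ^ (1 / r) := by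
  have hrq := one_div_le_one_div_of_add_eq_one_add hp h
  have hrp := one_div_le_one_div_of_add_eq_one_add hq ((add_comm _ _).trans h)
  have hA (j : G) : 0 ≤ |A (i - j)| ^ p := by positivity
  have hf (j : G) : 0 ≤ |f j| ^ q := by positivity
  have holder := sum_prod_rpow_le_prod_sum_rpow Finset.univ
    (u := ![fun j => |A (i - j)| ^ p * |f j| ^ q, fun j => |A (i - j)| ^ p, fun j => |f j| ^ q])
    (w := ![1 / r, 1 / p - 1 / r, 1 / q - 1 / r])
    (fun k j => by fin_cases k; exacts [mul_nonneg (hA j) (hf j), hA j, hf j])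
    (fun k _ => by fin_cases k; exacts [by simpa using hr.le, sub_nonneg.2 hrp, sub_nonneg.2 hrq])
    (by simp only [Fin.sum_univ_three, Matrix.cons_val]; linarith)
  simp only [Fin.prod_univ_three, Matrix.cons_val] at holder
  calc |(circulant A *ᵥ f) i| ≤ ∑ j, |A (i - j)| * |f j| := by
        simp only [← abs_mul]
        exact Finset.abs_sum_le_sum_abs _ _
    _ ≤ (∑ j, |A (i - j)| ^ p * |f j| ^ q) ^ (1 / r) *
          (∑ j, |A (i - j)| ^ p) ^ (1 / p - 1 / r) * (∑ j, |f j| ^ q) ^ (1 / q - 1 / r) := by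
        rw [Finset.sum_congr rfl fun j _ => mul_eq_rpow_mul_rpow_mul_rpow (abs_nonneg (A (i - j)))
          (abs_nonneg (f j)) (by linarith : 0 < p) (by linarith : 0 < q) (1 / r)]
        exact holder
    _ = _ := by
        rw [← Equiv.sum_comp (Equiv.subLeft i) fun j => |A j| ^ p]
        simp only [Equiv.subLeft_apply]
        ring

lemma sum_sum_sub_mul (u v : G → ℝ) : ∑ i, ∑ j, u (i - j) * v j = (∑ i, u i) * ∑ j, v j := by
  rw [Finset.sum_comm, Finset.mul_sum]
  refine Finset.sum_congr rfl fun j _ => ?_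
  rw [← Finset.sum_mul, ← Equiv.sum_comp (Equiv.subRight j) u]
  rfl

lemma lpNorm_circulant_mulVec_le (hp : 1 ≤ p) (hq : 1 ≤ q) (hr : 0 < r)
    (h : 1 / p + 1 / q = 1 + 1 / r) (A f : G → ℝ) :
    lpNorm r (circulant A *ᵥ f) ≤ lpNorm p A * lpNorm q f := by
  set a := ∑ j, |A j| ^ p
  set b := ∑ j, |f j| ^ q
  have ha : 0 ≤ a := sum_abs_rpow_nonneg p A
  have hb : 0 ≤ b := sum_abs_rpow_nonneg q f
  let X (i : G) : ℝ := ∑ j, |A (i - j)| ^ p * |f j| ^ q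
  have hX (i : G) : 0 ≤ X i := Finset.sum_nonneg fun j _ => by positivity
  have hXr (i : G) : |X i ^ (1 / r)| ^ r = X i := by
    rw [abs_of_nonneg (Real.rpow_nonneg (hX i) _), one_div, Real.rpow_inv_rpow (hX i) hr.ne']
  have hsum {c t : ℝ} (hc : 0 ≤ c) (ht : 1 ≤ t) :
      c ^ (1 / t - 1 / r) * c ^ (1 / r) = c ^ (1 / t) := by
    rw [← Real.rpow_add' hc (by simp; linarith), sub_add_cancel]
  calc lpNorm r (circulant A *ᵥ f)
      ≤ lpNorm r ((a ^ (1 / p - 1 / r) * b ^ (1 / q - 1 / r)) • fun i => X i ^ (1 / r)) :=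
        lpNorm_mono hr.le fun i =>
          (abs_circulant_mulVec_le hp hq hr h A f i).trans (le_abs_self _)
    _ = a ^ (1 / p - 1 / r) * b ^ (1 / q - 1 / r) * (a * b) ^ (1 / r) := by
        rw [lpNorm_smul hr, abs_of_nonneg (by positivity), lpNorm,
          Finset.sum_congr rfl fun i _ => hXr i, sum_sum_sub_mul (fun i => |A i| ^ p)]
    _ = lpNorm p A * lpNorm q f := by
        rw [Real.mul_rpow ha hb, mul_mul_mul_comm, hsum ha hp, hsum hb hq, lpNorm, lpNorm]

end Young

section Pow

variable {ι : Type*} [Fintype ι] {r : ℝ}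

lemma abs_pow_sub_pow_le_mul_add (d : ℕ) (a b : ℝ) :
    |a ^ d - b ^ d| ≤ d * ((|a| ^ (d - 1) + |b| ^ (d - 1)) * |a - b|) := by
  have hmax : max |a| |b| ^ (d - 1) ≤ |a| ^ (d - 1) + |b| ^ (d - 1) := by
    rcases max_cases |a| |b| with h | h <;> rw [h.1] <;> simp
  calc |a ^ d - b ^ d| ≤ |a - b| * d * max |a| |b| ^ (d - 1) := abs_pow_sub_pow_le a b d
    _ ≤ |a - b| * d * (|a| ^ (d - 1) + |b| ^ (d - 1)) := by gcongr
    _ = d * ((|a| ^ (d - 1) + |b| ^ (d - 1)) * |a - b|) := by ring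

lemma lpNorm_pow_sub_pow_le {d : ℕ} (hd : 2 ≤ d) (hr : (d : ℝ) ≤ r) (y z : ι → ℝ) :
    lpNorm (r / d) (y ^ d - z ^ d) ≤
      d * (lpNorm r y ^ (d - 1) + lpNorm r z ^ (d - 1)) * lpNorm r (y - z) := by
  have hd0 : (0 : ℝ) < d := by positivity
  have hr0 : 0 < r := hd0.trans_le hr
  have hcast : ((d - 1 : ℕ) : ℝ) = d - 1 := by rw [Nat.cast_sub (by omega), Nat.cast_one]
  have hd1 : (0 : ℝ) < (d - 1 : ℕ) := by exact_mod_cast (by omega : 0 < d - 1)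
  have hle : ((d - 1 : ℕ) : ℝ) ≤ r := by linarith
  have hholder : (r / (d - 1 : ℕ)).HolderTriple r (r / d) :=
    ⟨by rw [inv_div, inv_div, hcast]; field_simp; ring, by positivity, hr0⟩
  let u (x : ι → ℝ) : ι → ℝ := |x| ^ (d - 1)
  have hu (x : ι → ℝ) : lpNorm (r / (d - 1 : ℕ)) (u x) = lpNorm r x ^ (d - 1) := by
    rw [lpNorm_pow (by omega), lpNorm_abs]
  calc lpNorm (r / d) (y ^ d - z ^ d)
      ≤ lpNorm (r / d) ((d : ℝ) • ((u y + u z) * (y - z))) := by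
        refine lpNorm_mono (by positivity) fun i => ?_
        refine (abs_pow_sub_pow_le_mul_add d (y i) (z i)).trans (le_of_eq ?_)
        simp only [u, Pi.smul_apply, Pi.mul_apply, Pi.add_apply, Pi.pow_apply, Pi.abs_apply,
          Pi.sub_apply, smul_eq_mul, abs_mul, Nat.abs_cast]
        rw [abs_of_nonneg (by positivity : 0 ≤ |y i| ^ (d - 1) + |z i| ^ (d - 1))]
    _ = d * lpNorm (r / d) ((u y + u z) * (y - z)) := by
        rw [lpNorm_smul (by positivity), Nat.abs_cast]
    _ ≤ d * ((lpNorm (r / (d - 1 : ℕ)) (u y) + lpNorm (r / (d - 1 : ℕ)) (u z)) *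
          lpNorm r (y - z)) := by
        gcongr
        exact (lpNorm_mul_le hholder _ _).trans (mul_le_mul_of_nonneg_right
          (lpNorm_add_le ((one_le_div hd1).2 hle) _ _) (lpNorm_nonneg _ _))
    _ = d * (lpNorm r y ^ (d - 1) + lpNorm r z ^ (d - 1)) * lpNorm r (y - z) := by
        rw [hu, hu, mul_assoc]

end Pow

section UpdateZero

variable {G : Type*} [Zero G] [DecidableEq G] {d : ℕ} {x y : G → ℝ}

lemma pow_eq_single_add_update_pow (hd : d ≠ 0) (hx : x 0 = 1) :
    x ^ d = Pi.single 0 1 + Function.update x 0 0 ^ d := by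
  ext i
  rcases eq_or_ne i 0 with rfl | hi <;> simp [*]

lemma pow_sub_pow_eq_update_pow_sub (hd : d ≠ 0) (hx : x 0 = 1) (hy : y 0 = 1) :
    x ^ d - y ^ d = Function.update x 0 0 ^ d - Function.update y 0 0 ^ d := by
  rw [pow_eq_single_add_update_pow hd hx, pow_eq_single_add_update_pow hd hy,
    add_sub_add_left_eq_sub]

end UpdateZero

section BoundaryMap

open Matrix

variable {G : Type*} [Fintype G] [AddGroup G] {d : ℕ} {A x y : G → ℝ} {ε : ℝ}

lemma lpNorm_add_one_circulant_mulVec_le (hd : 1 ≤ d) (A f : G → ℝ) :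
    lpNorm (d + 1) (circulant A *ᵥ f) ≤ lpNorm ((d + 1) / 2) A * lpNorm ((d + 1) / d) f := by
  have hd1 : (1 : ℝ) ≤ d := by exact_mod_cast hd
  refine lpNorm_circulant_mulVec_le ?_ ?_ (by positivity) ?_ A f
  · rw [one_le_div two_pos]
    linarith
  · rw [one_le_div (by positivity)]
    linarith
  · field_simp
    ring

lemma le_circulant_mulVec_pow (hA : 0 ≤ A) (hx : 0 ≤ x) (hx0 : x 0 = 1) (i : G) :
    A i ≤ (circulant A *ᵥ x ^ d) i := by
  have h : A (i - 0) * (x ^ d) 0 ≤ ∑ j, A (i - j) * (x ^ d) j :=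
    Finset.single_le_sum (f := fun j => A (i - j) * (x ^ d) j)
      (fun j _ => mul_nonneg (hA _) (pow_nonneg (hx j) d)) (Finset.mem_univ 0)
  rwa [sub_zero, Pi.pow_apply, hx0, one_pow, mul_one] at h

/-- The boundary law operator for the transfer operator `A`, in the variable `x = λ^{1/d}` and
normalised at `0`: for even `A`, a positive `x` with `x 0 = 1` is a fixed point exactly when
`λ = x ^ d` solves the boundary law equation. The convolution `∑ j, A (i - j) * f j` is encoded as
`circulant A *ᵥ f`. -/
def boundaryMap (A : G → ℝ) (d : ℕ) (x : G → ℝ) : G → ℝ :=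
  fun i => (circulant A *ᵥ x ^ d) i / (circulant A *ᵥ x ^ d) 0

lemma boundaryMap_zero (hA : 0 ≤ A) (hA0 : 1 ≤ A 0) (hx : 0 ≤ x) (hx0 : x 0 = 1) :
    boundaryMap A d x 0 = 1 :=
  div_self (zero_lt_one.trans_le (hA0.trans (le_circulant_mulVec_pow hA hx hx0 0))).ne'

variable [DecidableEq G]

lemma abs_circulant_mulVec_zero_le {p q : ℝ} (h : p.HolderConjugate q)
    (hA : ∀ i, A (-i) = A i) {f : G → ℝ} (hf : f 0 = 0) :
    |(circulant A *ᵥ f) 0| ≤ lpNorm p (Function.update A 0 0) * lpNorm q f := by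
  have heq : (circulant A *ᵥ f) 0 = Function.update A 0 0 ⬝ᵥ f := by
    refine Finset.sum_congr rfl fun j _ => ?_
    rcases eq_or_ne j 0 with rfl | hj <;> simp [*]
  rw [heq]
  exact abs_dotProduct_le h _ f

/-- The nonnegative functions normalised to `1` at `0` whose `ℓ^{d+1}` norm off `0` is at most `ε`;
the restriction to `G ∖ {0}` is encoded as `Function.update x 0 0`. -/
def boundaryBall (G : Type*) [Fintype G] [AddGroup G] [DecidableEq G] (d : ℕ) (ε : ℝ) :
    Set (G → ℝ) :=
  {x | 0 ≤ x ∧ x 0 = 1 ∧ lpNorm (d + 1) (Function.update x 0 0) ≤ ε}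

lemma isClosed_boundaryBall (d : ℕ) (ε : ℝ) : IsClosed (boundaryBall G d ε) := by
  have hcont : Continuous fun x : G → ℝ => lpNorm (d + 1) (Function.update x 0 0) :=
    (continuous_lpNorm (by simp)).comp (continuous_id.update 0 continuous_const)
  exact (isClosed_le continuous_const continuous_id).inter
    ((isClosed_eq (continuous_apply 0) continuous_const).inter (isClosed_le hcont continuous_const))

lemma single_mem_boundaryBall (d : ℕ) (hε : 0 ≤ ε) : Pi.single 0 1 ∈ boundaryBall G d ε := by
  refine ⟨Pi.single_nonneg.2 zero_le_one, Pi.single_eq_same 0 1, ?_⟩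
  have hzero : Function.update (Pi.single 0 1 : G → ℝ) 0 0 = (0 : ℝ) • 0 := by
    rw [Pi.single, Function.update_idem, zero_smul, ← Pi.zero_apply (M := fun _ : G => ℝ) 0,
      Function.update_eq_self]
  rwa [hzero, lpNorm_smul (by positivity), abs_zero, zero_mul]

lemma mapsTo_boundaryMap (hd : 1 ≤ d) (hA : 0 ≤ A) (hA0 : 1 ≤ A 0)
    (h : lpNorm (d + 1) (Function.update A 0 0) + lpNorm ((d + 1) / 2) A * ε ^ d ≤ ε) :
    Set.MapsTo (boundaryMap A d) (boundaryBall G d ε) (boundaryBall G d ε) := by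
  rintro x ⟨hx, hx0, hxε⟩
  set x' := Function.update x 0 0
  have hle (i : G) : A i ≤ (circulant A *ᵥ x ^ d) i := le_circulant_mulVec_pow hA hx hx0 i
  have hpt (i : G) : |Function.update (boundaryMap A d x) 0 0 i| ≤
      |(Function.update A 0 0 + circulant A *ᵥ x' ^ d) i| := by
    rcases eq_or_ne i 0 with rfl | hi
    · simp only [Function.update_self, abs_zero, abs_nonneg]
    · have hN : (circulant A *ᵥ x ^ d) i = (Function.update A 0 0 + circulant A *ᵥ x' ^ d) i := by
        rw [pow_eq_single_add_update_pow (by omega) hx0, mulVec_add, mulVec_single_one]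
        simp [hi, x']
      rw [Function.update_of_ne hi, boundaryMap, ← hN, abs_div]
      exact div_le_self (abs_nonneg _) ((hA0.trans (hle 0)).trans (le_abs_self _))
  refine ⟨fun i => div_nonneg ((hA i).trans (hle i)) ((hA 0).trans (hle 0)),
    boundaryMap_zero hA hA0 hx hx0, ?_⟩
  calc lpNorm (d + 1) (Function.update (boundaryMap A d x) 0 0)
      ≤ lpNorm (d + 1) (Function.update A 0 0 + circulant A *ᵥ x' ^ d) :=
        lpNorm_mono (by positivity) hpt
    _ ≤ lpNorm (d + 1) (Function.update A 0 0) + lpNorm (d + 1) (circulant A *ᵥ x' ^ d) :=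
        lpNorm_add_le (by simp) _ _
    _ ≤ lpNorm (d + 1) (Function.update A 0 0) +
          lpNorm ((d + 1) / 2) A * lpNorm (d + 1) x' ^ d := by
        rw [← lpNorm_pow (by omega)]
        gcongr
        exact lpNorm_add_one_circulant_mulVec_le hd A _
    _ ≤ lpNorm (d + 1) (Function.update A 0 0) + lpNorm ((d + 1) / 2) A * ε ^ d := by
        gcongr
        exacts [lpNorm_nonneg _ _, lpNorm_nonneg _ _]
    _ ≤ ε := h

lemma lpNorm_pow_sub_pow_le_of_mem_boundaryBall (hd : 2 ≤ d) (hx : x ∈ boundaryBall G d ε)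
    (hy : y ∈ boundaryBall G d ε) :
    lpNorm ((d + 1) / d) (x ^ d - y ^ d) ≤ 2 * d * ε ^ (d - 1) * lpNorm (d + 1) (x - y) := by
  obtain ⟨-, hx0, hxε⟩ := hx
  obtain ⟨-, hy0, hyε⟩ := hy
  have hsub : Function.update x 0 0 - Function.update y 0 0 = x - y := by
    simpa using (pow_sub_pow_eq_update_pow_sub one_ne_zero hx0 hy0).symm
  rw [pow_sub_pow_eq_update_pow_sub (by omega) hx0 hy0]
  refine (lpNorm_pow_sub_pow_le hd (by simp) _ _).trans ?_
  rw [hsub]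
  calc d * (lpNorm (d + 1) (Function.update x 0 0) ^ (d - 1) +
          lpNorm (d + 1) (Function.update y 0 0) ^ (d - 1)) * lpNorm (d + 1) (x - y)
      ≤ d * (ε ^ (d - 1) + ε ^ (d - 1)) * lpNorm (d + 1) (x - y) := by
        gcongr
        exacts [lpNorm_nonneg _ _, lpNorm_nonneg _ _, lpNorm_nonneg _ _]
    _ = 2 * d * ε ^ (d - 1) * lpNorm (d + 1) (x - y) := by ring

lemma abs_boundaryMap_sub_le (hA : 0 ≤ A) (hA0 : 1 ≤ A 0) (hx : 0 ≤ x) (hx0 : x 0 = 1)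
    (hy : 0 ≤ y) (hy0 : y 0 = 1) (i : G) :
    |(boundaryMap A d x - boundaryMap A d y) i| ≤ |(circulant A *ᵥ (x ^ d - y ^ d)) i| +
      |(circulant A *ᵥ (x ^ d - y ^ d)) 0| * |Function.update (boundaryMap A d y) 0 0 i| := by
  rcases eq_or_ne i 0 with rfl | hi
  · rw [Pi.sub_apply, boundaryMap_zero hA hA0 hx hx0, boundaryMap_zero hA hA0 hy hy0, sub_self,
      abs_zero]
    positivity
  have hDx : 1 ≤ (circulant A *ᵥ x ^ d) 0 := hA0.trans (le_circulant_mulVec_pow hA hx hx0 0)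
  have hDy : 1 ≤ (circulant A *ᵥ y ^ d) 0 := hA0.trans (le_circulant_mulVec_pow hA hy hy0 0)
  rw [Function.update_of_ne hi, mulVec_sub, Pi.sub_apply, Pi.sub_apply, Pi.sub_apply]
  set Nx := (circulant A *ᵥ x ^ d) i
  set Dx := (circulant A *ᵥ x ^ d) 0
  set Ny := (circulant A *ᵥ y ^ d) i
  set Dy := (circulant A *ᵥ y ^ d) 0
  have hquot : Nx / Dx - Ny / Dy = ((Nx - Ny) - (Dx - Dy) * (Ny / Dy)) / Dx := by
    field_simp
    ring
  calc |Nx / Dx - Ny / Dy| = |(Nx - Ny) - (Dx - Dy) * (Ny / Dy)| / |Dx| := by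
        rw [hquot, abs_div]
    _ ≤ |(Nx - Ny) - (Dx - Dy) * (Ny / Dy)| :=
        div_le_self (abs_nonneg _) (hDx.trans (le_abs_self _))
    _ ≤ |Nx - Ny| + |Dx - Dy| * |Ny / Dy| := by
        rw [← abs_mul]
        exact abs_sub _ _

lemma lpNorm_boundaryMap_sub_le (hd : 2 ≤ d) (hA : 0 ≤ A) (hA0 : 1 ≤ A 0)
    (hAeven : ∀ i, A (-i) = A i)
    (hmaps : Set.MapsTo (boundaryMap A d) (boundaryBall G d ε) (boundaryBall G d ε))
    (hx : x ∈ boundaryBall G d ε) (hy : y ∈ boundaryBall G d ε) :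
    lpNorm (d + 1) (boundaryMap A d x - boundaryMap A d y) ≤
      (2 * d * lpNorm ((d + 1) / 2) A * ε ^ (d - 1) +
        2 * d * lpNorm (d + 1) (Function.update A 0 0) * ε ^ d) * lpNorm (d + 1) (x - y) := by
  have hconj : ((d : ℝ) + 1).HolderConjugate ((d + 1) / d) :=
    ⟨by field_simp; ring, by positivity, by positivity⟩
  have hTy : lpNorm (d + 1) (Function.update (boundaryMap A d y) 0 0) ≤ ε := (hmaps hy).2.2
  have hPnorm := lpNorm_pow_sub_pow_le_of_mem_boundaryBall hd hx hy
  obtain ⟨hx, hx0, hxε⟩ := hx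
  have hε : 0 ≤ ε := (lpNorm_nonneg _ _).trans hxε
  obtain ⟨hy, hy0, -⟩ := hy
  set P := x ^ d - y ^ d with hP
  have hP0 : P 0 = 0 := by simp [hP, hx0, hy0]
  set v := Function.update (boundaryMap A d y) 0 0
  set a := lpNorm ((d + 1) / 2) A
  set a' := lpNorm (d + 1) (Function.update A 0 0)
  have ha : 0 ≤ a := lpNorm_nonneg _ _
  have ha' : 0 ≤ a' := lpNorm_nonneg _ _
  calc lpNorm (d + 1) (boundaryMap A d x - boundaryMap A d y)
      ≤ lpNorm (d + 1) (|circulant A *ᵥ P| + |(circulant A *ᵥ P) 0| • |v|) :=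
        lpNorm_mono (by positivity) fun i =>
          (abs_boundaryMap_sub_le hA hA0 hx hx0 hy hy0 i).trans (le_abs_self _)
    _ ≤ lpNorm (d + 1) (circulant A *ᵥ P) + |(circulant A *ᵥ P) 0| * lpNorm (d + 1) v := by
        refine (lpNorm_add_le (by simp) _ _).trans_eq ?_
        rw [lpNorm_smul (by positivity), abs_abs, lpNorm_abs, lpNorm_abs]
    _ ≤ a * lpNorm ((d + 1) / d) P + a' * lpNorm ((d + 1) / d) P * ε := by
        refine add_le_add (lpNorm_add_one_circulant_mulVec_le (by omega) A P) ?_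
        exact mul_le_mul (abs_circulant_mulVec_zero_le hconj hAeven hP0) hTy (lpNorm_nonneg _ _)
          (mul_nonneg ha' (lpNorm_nonneg _ _))
    _ = (a + a' * ε) * lpNorm ((d + 1) / d) P := by ring
    _ ≤ (a + a' * ε) * (2 * d * ε ^ (d - 1) * lpNorm (d + 1) (x - y)) := by gcongr
    _ = (2 * d * a * ε ^ (d - 1) + 2 * d * a' * ε ^ d) * lpNorm (d + 1) (x - y) := by
        rw [← mul_pow_sub_one (by omega : d ≠ 0) ε]
        ring

lemma lt_one_of_contraction_constant_lt_one {γ δ : ℝ} (hd : 2 ≤ d) (hγ : 1 ≤ γ) (hδ : 0 ≤ δ)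
    (h : 2 * d * γ * ε ^ (d - 1) + 2 * d * δ * ε ^ d < 1) : ε < 1 := by
  by_contra! hε1
  have hd2 : (2 : ℝ) ≤ d := by exact_mod_cast hd
  have hfst : 1 ≤ 2 * d * γ * ε ^ (d - 1) :=
    one_le_mul_of_one_le_of_one_le (one_le_mul_of_one_le_of_one_le (by linarith) hγ)
      (one_le_pow₀ hε1)
  have hsnd : 0 ≤ 2 * d * δ * ε ^ d := by positivity
  linarith

lemma exists_boundaryLaw_of_mem_goodSet [Nontrivial G] (hd : 2 ≤ d) (hA : ∀ i, 0 < A i)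
    (hA0 : 1 ≤ A 0) (hAeven : ∀ i, A (-i) = A i) {γ δ : ℝ} (h : (γ, δ) ∈ goodSet d)
    (hγ : lpNorm ((d + 1) / 2) A ≤ γ) (hδ : lpNorm (d + 1) (Function.update A 0 0) ≤ δ) :
    ∃ lam : G → ℝ, (∀ i, 0 < lam i) ∧ lam 0 = 1 ∧ (∃ i, lam i ≠ 1) ∧
      ∀ i, lam i = ((∑ j, A (i - j) * lam j) / ∑ j, A j * lam j) ^ d := by
  obtain ⟨hγ1, hδ0, ε, hε, hmaps, hcontr⟩ := h
  dsimp only at hγ1 hδ0 hmaps hcontr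
  have hApos : 0 ≤ A := fun i => (hA i).le
  have hMapsTo : Set.MapsTo (boundaryMap A d) (boundaryBall G d ε) (boundaryBall G d ε) :=
    mapsTo_boundaryMap (by omega) hApos hA0 (le_trans (by gcongr) hmaps)
  obtain ⟨x, ⟨hx, hx0, hxε⟩, hfix⟩ :=
    exists_fixedPoint_of_lpNorm_contraction (by simp : 1 ≤ (d : ℝ) + 1)
      (isClosed_boundaryBall d ε) ⟨_, single_mem_boundaryBall d hε.le⟩ hMapsTo
      (lt_of_le_of_lt (by gcongr) hcontr)
      fun x hx y hy => lpNorm_boundaryMap_sub_le hd hApos hA0 hAeven hMapsTo hx hy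
  have hN (i : G) : 0 < (circulant A *ᵥ x ^ d) i :=
    (hA i).trans_le (le_circulant_mulVec_pow hApos hx hx0 i)
  have hxpos (i : G) : 0 < x i := congrFun hfix i ▸ div_pos (hN i) (hN 0)
  have hε1 : ε < 1 := lt_one_of_contraction_constant_lt_one hd hγ1.le hδ0.le hcontr
  obtain ⟨i, hi⟩ := exists_ne (0 : G)
  have hxi : x i ≤ ε := by
    have := (abs_le_lpNorm (by simp) (Function.update x 0 0) i).trans hxε
    rw [Function.update_of_ne hi] at this
    exact (le_abs_self _).trans this
  refine ⟨x ^ d, fun i => pow_pos (hxpos i) d, by simp [hx0],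
    ⟨i, (pow_lt_one₀ (hx i) (hxi.trans_lt hε1) (by omega)).ne⟩, fun i => ?_⟩
  have hden : (circulant A *ᵥ x ^ d) 0 = ∑ j, A j * (x ^ d) j :=
    Finset.sum_congr rfl fun j _ => by
      change A (0 - j) * _ = _
      rw [zero_sub, hAeven]
  rw [← hden]
  exact congrArg (· ^ d) (congrFun hfix i).symm

end BoundaryMap

section FuzzyOperator

variable {q : ℕ} {p η : ℝ} {P Q : ℤ → ℝ}

lemma normM_eq_lpNorm [NeZero q] (p : ℝ) (B : ZMod q → ℝ) : normM q p B = lpNorm p B := by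
  rw [normM, tsum_fintype, lpNorm]

lemma tsum_ne_zero_abs_rpow {ι : Type*} [Zero ι] [DecidableEq ι] (hp : p ≠ 0) (f : ι → ℝ) :
    ∑' i : {i : ι // i ≠ 0}, |f i| ^ p = ∑' i, |Function.update f 0 0 i| ^ p := by
  rw [show ∑' i : {i : ι // i ≠ 0}, |f i| ^ p = _ from tsum_subtype {0}ᶜ fun i => |f i| ^ p]
  refine tsum_congr fun i => ?_
  rcases eq_or_ne i 0 with rfl | hi
  · simp [Real.zero_rpow hp]
  · simp [hi]

lemma normM0_eq_normM_update (hp : p ≠ 0) (B : ZMod q → ℝ) :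
    normM0 q p B = normM q p (Function.update B 0 0) := by
  rw [normM0, tsum_ne_zero_abs_rpow hp, normM]

lemma normZ0_eq_normZ_update (hp : p ≠ 0) (P : ℤ → ℝ) :
    normZ0 p P = normZ p (Function.update P 0 0) := by
  rw [normZ0, tsum_ne_zero_abs_rpow hp, normZ]

lemma summable_abs_rpow {ι : Type*} {f : ι → ℝ} (hf : Summable f) (hp : 1 ≤ p) :
    Summable fun i => |f i| ^ p := by
  refine hf.abs.of_norm_bounded_eventually ?_
  filter_upwards [hf.abs.tendsto_cofinite_zero.eventually (ge_mem_nhds zero_lt_one)] with i hi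
  rw [Real.norm_of_nonneg (by positivity)]
  exact Real.rpow_le_self_of_le_one (abs_nonneg _) hi hp

lemma lpNorm_comp_le_normZ {ι : Type*} [Fintype ι] {e : ι → ℤ} (he : Function.Injective e)
    (hP : Summable P) (hp : 1 ≤ p) : lpNorm p (P ∘ e) ≤ normZ p P := by
  refine Real.rpow_le_rpow (sum_abs_rpow_nonneg p _) ?_ (by positivity)
  rw [← tsum_fintype (L := .unconditional _)]
  exact tsum_comp_le_tsum_of_inj (summable_abs_rpow hP hp) (fun _ => by positivity) he

lemma normM_le_normZ_add_tsum [NeZero q] (hP : Summable P) (hp : 1 ≤ p) (B : ZMod q → ℝ) :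
    normM q p B ≤ normZ p P + ∑' i, |B i - P i.valMinAbs| := by
  let P' : ZMod q → ℝ := P ∘ ZMod.valMinAbs
  calc normM q p B = lpNorm p (P' + (B - P')) := by rw [add_sub_cancel, normM_eq_lpNorm]
    _ ≤ lpNorm p P' + lpNorm p (B - P') := lpNorm_add_le hp _ _
    _ ≤ normZ p P + ∑' i, |B i - P i.valMinAbs| :=
        add_le_add (lpNorm_comp_le_normZ ZMod.injective_valMinAbs hP hp)
          ((lpNorm_le_sum_abs hp _).trans_eq (tsum_fintype _).symm)

lemma Qfuzzy_neg (hQ : ∀ j, Q (-j) = Q j) (i : ZMod q) : Qfuzzy q Q (-i) = Qfuzzy q Q i := by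
  let e : {j : ℤ // (j : ZMod q) = -i} ≃ {j : ℤ // (j : ZMod q) = i} :=
    (Equiv.neg ℤ).subtypeEquiv fun j => by simp [neg_eq_iff_eq_neg]
  rw [Qfuzzy, Qfuzzy, ← e.tsum_eq]
  exact tsum_congr fun j => (hQ j.1).symm

lemma le_Qfuzzy (hQ : 0 ≤ Q) (hQsum : Summable Q) (i : ZMod q) : Q i.valMinAbs ≤ Qfuzzy q Q i :=
  (hQsum.subtype {j : ℤ | (j : ZMod q) = i}).le_tsum
    (⟨i.valMinAbs, i.coe_valMinAbs⟩ : {j : ℤ // (j : ZMod q) = i}) fun j _ => hQ j.1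

lemma hasSum_Qfuzzy (q : ℕ) (hQsum : Summable Q) : HasSum (Qfuzzy q Q) (∑' j, Q j) :=
  hQsum.hasSum.tsum_fiberwise fun j : ℤ => (j : ZMod q)

lemma eventually_mem_range_valMinAbs (j : ℤ) :
    ∀ᶠ q : ℕ in atTop, j ∈ Set.range (ZMod.valMinAbs : ZMod q → ℤ) := by
  filter_upwards [eventually_ge_atTop (2 * j.natAbs + 1)] with q hq
  have : NeZero q := ⟨by omega⟩
  exact ⟨j, (ZMod.valMinAbs_spec _ _).2 ⟨rfl, by omega, by omega⟩⟩

lemma tendsto_tsum_valMinAbs (hP : Summable P) :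
    Tendsto (fun q : ℕ => ∑' i : ZMod q, P i.valMinAbs) atTop (𝓝 (∑' j, P j)) := by
  have hind (q : ℕ) : ∑' i : ZMod q, P i.valMinAbs =
      ∑' j, (Set.range (ZMod.valMinAbs : ZMod q → ℤ)).indicator P j := by
    rw [← tsum_range P ZMod.injective_valMinAbs, tsum_subtype]
  simp only [hind]
  refine tendsto_tsum_of_dominated_convergence hP.norm (fun j => ?_)
    (.of_forall fun q j => norm_indicator_le_norm_self P j)
  refine tendsto_const_nhds.congr' ?_
  filter_upwards [eventually_mem_range_valMinAbs j] with q hq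
  exact (Set.indicator_of_mem hq P).symm

lemma tendsto_tsum_abs_Qfuzzy_sub (hQ : 0 ≤ Q) (hQsum : Summable Q) :
    Tendsto (fun q : ℕ => ∑' i : ZMod q, |Qfuzzy q Q i - Q i.valMinAbs|) atTop (𝓝 0) := by
  have hsum (q : ℕ) : Summable fun i : ZMod q => Q i.valMinAbs :=
    hQsum.comp_injective ZMod.injective_valMinAbs
  have heq (q : ℕ) : ∑' i : ZMod q, |Qfuzzy q Q i - Q i.valMinAbs| =
      ∑' j, Q j - ∑' i : ZMod q, Q i.valMinAbs := by
    simp only [abs_of_nonneg (sub_nonneg.2 (le_Qfuzzy hQ hQsum _))]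
    rw [(hasSum_Qfuzzy q hQsum).summable.tsum_sub (hsum q), (hasSum_Qfuzzy q hQsum).tsum_eq]
  simpa only [heq, sub_self] using (tendsto_tsum_valMinAbs hQsum).const_sub (∑' j, Q j)

lemma eventually_normM_Qfuzzy_le (hQ : 0 ≤ Q) (hQsum : Summable Q) (hp : 1 ≤ p) (hη : 0 < η) :
    ∀ᶠ q : ℕ in atTop, normM q p (Qfuzzy q Q) ≤ normZ p Q + η := by
  filter_upwards [(tendsto_tsum_abs_Qfuzzy_sub hQ hQsum).eventually_le_const hη,
    eventually_ne_atTop 0] with q htail hq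
  have : NeZero q := ⟨hq⟩
  exact (normM_le_normZ_add_tsum hQsum hp _).trans (add_le_add_right htail _)

lemma eventually_normM0_Qfuzzy_le (hQ : 0 ≤ Q) (hQsum : Summable Q) (hp : 1 ≤ p) (hη : 0 < η) :
    ∀ᶠ q : ℕ in atTop, normM0 q p (Qfuzzy q Q) ≤ normZ0 p Q + η := by
  filter_upwards [(tendsto_tsum_abs_Qfuzzy_sub hQ hQsum).eventually_le_const hη,
    eventually_ne_atTop 0] with q htail hq
  have : NeZero q := ⟨hq⟩
  have hp0 : p ≠ 0 := by linarith
  have hterm (i : ZMod q) :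
      |Function.update (Qfuzzy q Q) 0 0 i - Function.update Q 0 0 i.valMinAbs| ≤
        |Qfuzzy q Q i - Q i.valMinAbs| := by
    rcases eq_or_ne i 0 with rfl | hi
    · simp
    · rw [Function.update_of_ne hi, Function.update_of_ne (by simpa using hi)]
  rw [normM0_eq_normM_update hp0, normZ0_eq_normZ_update hp0]
  refine (normM_le_normZ_add_tsum (hQsum.update 0 0) hp _).trans (add_le_add_right ?_ _)
  exact ((Summable.of_finite).tsum_le_tsum hterm .of_finite).trans htail

end FuzzyOperator

lemma exists_pos_add_mem_of_mem_interior {s : Set (ℝ × ℝ)} {x : ℝ × ℝ} (hx : x ∈ interior s) :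
    ∃ η > 0, (x.1 + η, x.2 + η) ∈ s := by
  have hcont : Tendsto (fun η : ℝ => (x.1 + η, x.2 + η)) (𝓝[>] 0) (𝓝 x) := by
    have : ContinuousAt (fun η : ℝ => (x.1 + η, x.2 + η)) 0 := by fun_prop
    simpa [ContinuousAt] using this.tendsto.mono_left nhdsWithin_le_nhds
  obtain ⟨η, hmem, hη⟩ :=
    ((hcont.eventually (mem_interior_iff_mem_nhds.1 hx)).and self_mem_nhdsWithin).exists
  exact ⟨η, hη, hmem⟩

theorem stmt14_general (d : ℕ) (hd : 2 ≤ d)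
    (Q : ℤ → ℝ) (hQpos : ∀ j, 0 < Q j) (hQeven : ∀ j, Q (-j) = Q j)
    (hQ0 : 1 ≤ Q 0) (hQsum : Summable Q)
    (hgood : (normZ (((d : ℝ) + 1) / 2) Q, normZ0 ((d : ℝ) + 1) Q)
      ∈ interior (goodSet d)) :
    ∃ q₀ : ℕ, 2 ≤ q₀ ∧ ∀ q : ℕ, q₀ ≤ q → ∃ lam : ZMod q → ℝ,
      (∀ i, 0 < lam i) ∧ lam 0 = 1 ∧ (∃ i : ZMod q, lam i ≠ 1) ∧
      ∀ i : ZMod q, lam i =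
        ((∑' j : ZMod q, Qfuzzy q Q (i - j) * lam j) /
          (∑' j : ZMod q, Qfuzzy q Q j * lam j)) ^ d := by
  have hd2 : (2 : ℝ) ≤ d := by exact_mod_cast hd
  have hQ : 0 ≤ Q := fun j => (hQpos j).le
  obtain ⟨η, hη, hmem⟩ := exists_pos_add_mem_of_mem_interior hgood
  have hlarge := (eventually_ge_atTop 2).and
    ((eventually_normM_Qfuzzy_le hQ hQsum (by linarith : 1 ≤ ((d : ℝ) + 1) / 2) hη).and
      (eventually_normM0_Qfuzzy_le hQ hQsum (by linarith : 1 ≤ (d : ℝ) + 1) hη))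
  obtain ⟨q₀, hq₀⟩ := eventually_atTop.1 hlarge
  refine ⟨q₀, (hq₀ q₀ le_rfl).1, fun q hq => ?_⟩
  obtain ⟨hq2, hγ, hδ⟩ := hq₀ q hq
  have : NeZero q := ⟨by omega⟩
  have : Fact (1 < q) := ⟨hq2⟩
  rw [normM_eq_lpNorm] at hγ
  rw [normM0_eq_normM_update (by positivity), normM_eq_lpNorm] at hδ
  have hle (i : ZMod q) : Q i.valMinAbs ≤ Qfuzzy q Q i := le_Qfuzzy hQ hQsum i
  simpa only [tsum_fintype] using exists_boundaryLaw_of_mem_goodSet hd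
    (fun i => (hQpos _).trans_le (hle i)) (hQ0.trans (by simpa using hle 0)) (Qfuzzy_neg hQeven)
    hmem hγ hδ

/-- Theorem 3.1, part 2: existence of non-constant `q`-periodic boundary
law solutions for all sufficiently large periods `q`, provided
`(‖Q‖_{(d+1)/2,ℤ}, ‖Q‖_{d+1,ℤ∖{0}})` lies in the interior of the good set. -/
theorem stmt14 (d : ℕ) (hd : 2 ≤ d)
    (Q : ℤ → ℝ) (hQpos : ∀ j, 0 < Q j) (hQeven : ∀ j, Q (-j) = Q j)
    (hQ0 : Q 0 = 1) (hQsum : Summable Q)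
    (hcond : Summable fun i : ℕ =>
      (∑' j : ℕ, Qtilde Q (((i : ℤ) + 1) * ((j : ℤ) + 1))) ^ (((d : ℝ) + 1) / 2))
    (hgood : (normZ (((d : ℝ) + 1) / 2) Q, normZ0 ((d : ℝ) + 1) Q)
      ∈ interior (goodSet d)) :
    ∃ q₀ : ℕ, 2 ≤ q₀ ∧ ∀ q : ℕ, q₀ ≤ q → ∃ lam : ZMod q → ℝ,
      (∀ i, 0 < lam i) ∧ lam 0 = 1 ∧ (∃ i : ZMod q, lam i ≠ 1) ∧
      ∀ i : ZMod q, lam i =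
        ((∑' j : ZMod q, Qfuzzy q Q (i - j) * lam j) /
          (∑' j : ZMod q, Qfuzzy q Q j * lam j)) ^ d :=
  stmt14_general d hd Q hQpos hQeven hQ0.ge hQsum hgood
end
end
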